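/- arXiv:1508.02549 — 4 statements merged into one kernel-verified Lean document; each statement's English description precedes it below -/
import Mathlib

section
/- Let R be a unital associative (not necessarily commutative) ring, let A be an invertible N×N matrix over R, and let I, J ⊆ {1,…,N} be subsets of the same cardinality M such that the complementary submatrix A_{I^c J^c} is invertible. Then the M×M submatrix (A⁻¹)_{JI} of the inverse matrix is invertible, so the (I,J)-quasideterminant |A|_{IJ} exists, and it is given by the formula |A|_{IJ} = A_{IJ} − A_{IJ^c}·(A_{I^cJ^c})⁻¹·A_{I^cJ}. -/
/-!
Block elimination: subtracting `A_{·,Jᶜ} (A_{IᶜJᶜ})⁻¹ A_{Iᶜ,J}` from the columns `J` of `A` clears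
their rows in `Iᶜ` and leaves the Schur complement in the rows `I`. Since the rows `J` of `A⁻¹`
annihilate the columns `Jᶜ` of `A`, multiplying by them on the left does not notice the subtraction
and still gives the identity; only the block `(A⁻¹)_{JI}` contributes to that product. The same
argument with rows and columns exchanged gives the identity on the other side.
-/

section BlockElimination

variable {R l m m' n n' : Type*} [Ring R] [Fintype m'] [Fintype n']

theorem mul_sub_mul_mul_eq_add [Fintype m] [DecidableEq m']
    {x : Matrix l m R} {y : Matrix l m' R} {b : Matrix m n' R} {d : Matrix m' n' R}
    {t : Matrix n' m' R} (h_zero : x * b + y * d = 0) (h_inv : d * t = 1)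
    (a : Matrix m n R) (c : Matrix m' n R) :
    x * (a - b * t * c) = x * a + y * c := by
  have h_y : x * b * t = -y := by
    rw [eq_neg_of_add_eq_zero_left h_zero, Matrix.neg_mul, Matrix.mul_assoc, h_inv, Matrix.mul_one]
  calc x * (a - b * t * c) = x * a - x * b * t * c := by
        simp only [Matrix.mul_sub, Matrix.mul_assoc]
    _ = x * a + y * c := by rw [h_y, Matrix.neg_mul, sub_neg_eq_add]

theorem sub_mul_mul_mul_eq_add [Fintype n] [DecidableEq n']
    {x : Matrix n l R} {y : Matrix n' l R} {c : Matrix m' n R} {d : Matrix m' n' R}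
    {t : Matrix n' m' R} (h_zero : c * x + d * y = 0) (h_inv : t * d = 1)
    (a : Matrix m n R) (b : Matrix m n' R) :
    (a - b * t * c) * x = a * x + b * y := by
  have h_y : t * (c * x) = -y := by
    rw [eq_neg_of_add_eq_zero_left h_zero, Matrix.mul_neg, ← Matrix.mul_assoc, h_inv,
      Matrix.one_mul]
  calc (a - b * t * c) * x = a * x - b * (t * (c * x)) := by
        simp only [Matrix.sub_mul, Matrix.mul_assoc]
    _ = a * x + b * y := by rw [h_y, Matrix.mul_neg, sub_neg_eq_add]

end BlockElimination

-- `Matrix.toBlock_mul_eq_add` has the same conclusion, but assumes the coefficients commute.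
theorem toBlock_mul_eq_toBlock_mul_add_toBlock_mul_not
    {R k m n : Type*} [NonUnitalNonAssocSemiring R] [Fintype m]
    (A : Matrix k m R) (B : Matrix m n R) (r : k → Prop) (p : m → Prop) (s : n → Prop)
    [Fintype {i // p i}] [Fintype {i // ¬p i}] :
    (A * B).toBlock r s =
      A.toBlock r p * B.toBlock p s + A.toBlock r (¬p ·) * B.toBlock (¬p ·) s := by
  classical
  ext i j
  simp only [Matrix.toBlock_apply, Matrix.add_apply, Matrix.mul_apply]
  rw [← Fintype.sum_subtype_add_sum_subtype p]
  congr!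

section SchurComplement

variable {R m n : Type*} [Ring R] {A : Matrix m n R} {B : Matrix n m R}
  {p : m → Prop} {q : n → Prop} [Fintype {i // ¬p i}] [Fintype {j // ¬q j}]
  {T : Matrix {j // ¬q j} {i // ¬p i} R}

/-- The Schur complement of the block of `A` with rows outside `p` and columns outside `q`. The
inverse `T` of that block is an argument, because `Matrix.inv` requires commuting coefficients. -/
def schurComplement (A : Matrix m n R) (p : m → Prop) (q : n → Prop)
    [Fintype {i // ¬p i}] [Fintype {j // ¬q j}] (T : Matrix {j // ¬q j} {i // ¬p i} R) :
    Matrix {i // p i} {j // q j} R :=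
  A.toBlock p q - A.toBlock p (¬q ·) * T * A.toBlock (¬p ·) q

theorem toBlock_mul_schurComplement_eq_one [Fintype m] [DecidableEq m] [DecidableEq n]
    [Fintype {i // p i}] (hBA : B * A = 1) (hT : A.toBlock (¬p ·) (¬q ·) * T = 1) :
    B.toBlock q p * schurComplement A p q T = 1 := by
  have h_zero : B.toBlock q p * A.toBlock p (¬q ·) +
      B.toBlock q (¬p ·) * A.toBlock (¬p ·) (¬q ·) = 0 := by
    rw [← toBlock_mul_eq_toBlock_mul_add_toBlock_mul_not, hBA]
    exact Matrix.toBlock_one_disjoint disjoint_compl_right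
  rw [schurComplement, mul_sub_mul_mul_eq_add h_zero hT,
    ← toBlock_mul_eq_toBlock_mul_add_toBlock_mul_not, hBA, Matrix.toBlock_one_self]

theorem schurComplement_mul_toBlock_eq_one [Fintype n] [DecidableEq m] [DecidableEq n]
    [Fintype {j // q j}] (hAB : A * B = 1) (hT : T * A.toBlock (¬p ·) (¬q ·) = 1) :
    schurComplement A p q T * B.toBlock q p = 1 := by
  have h_zero : A.toBlock (¬p ·) q * B.toBlock q p +
      A.toBlock (¬p ·) (¬q ·) * B.toBlock (¬q ·) p = 0 := by
    rw [← toBlock_mul_eq_toBlock_mul_add_toBlock_mul_not, hAB]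
    exact Matrix.toBlock_one_disjoint disjoint_compl_left
  rw [schurComplement, sub_mul_mul_mul_eq_add h_zero hT,
    ← toBlock_mul_eq_toBlock_mul_add_toBlock_mul_not, hAB, Matrix.toBlock_one_self]

theorem quasideterminant_formula_general [Fintype m] [Fintype n] [DecidableEq m] [DecidableEq n]
    [Fintype {i // p i}] [Fintype {j // q j}] (hAB : A * B = 1) (hBA : B * A = 1)
    (hT₁ : A.toBlock (¬p ·) (¬q ·) * T = 1) (hT₂ : T * A.toBlock (¬p ·) (¬q ·) = 1) :
    B.toBlock q p * schurComplement A p q T = 1 ∧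
      schurComplement A p q T * B.toBlock q p = 1 :=
  ⟨toBlock_mul_schurComplement_eq_one hBA hT₁, schurComplement_mul_toBlock_eq_one hAB hT₂⟩

end SchurComplement

/-- **Existence and formula for the quasideterminant** (Proposition on quasideterminants).

Let `R` be a unital associative (not necessarily commutative) ring, let `A` be an
invertible `N × N` matrix over `R` (with two-sided inverse `B = A⁻¹`), and let
`I, J ⊆ {1,…,N}` be subsets of the same cardinality `M` such that the complementary
submatrix `A_{IᶜJᶜ}` is invertible (with two-sided inverse `Tc`).  Then the `M × M`
submatrix `(A⁻¹)_{JI}` of the inverse matrix is invertible — so the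
`(I,J)`-quasideterminant `|A|_{IJ} := ((A⁻¹)_{JI})⁻¹` exists — and it is given by
`|A|_{IJ} = A_{IJ} - A_{IJᶜ} * (A_{IᶜJᶜ})⁻¹ * A_{IᶜJ}`,
i.e. the displayed Schur complement is a two-sided inverse of `(A⁻¹)_{JI}`. -/
theorem quasideterminant_formula
    {R : Type*} [Ring R] {N : ℕ}
    (A B : Matrix (Fin N) (Fin N) R)
    (hAB : A * B = 1) (hBA : B * A = 1)
    (I J : Finset (Fin N)) (hcard : I.card = J.card)
    (Tc : Matrix {j // j ∉ J} {i // i ∉ I} R)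
    (hTc1 : A.submatrix (fun i : {i // i ∉ I} => (i : Fin N))
              (fun j : {j // j ∉ J} => (j : Fin N)) * Tc = 1)
    (hTc2 : Tc * A.submatrix (fun i : {i // i ∉ I} => (i : Fin N))
              (fun j : {j // j ∉ J} => (j : Fin N)) = 1) :
    B.submatrix (fun j : {j // j ∈ J} => (j : Fin N)) (fun i : {i // i ∈ I} => (i : Fin N)) *
        (A.submatrix (fun i : {i // i ∈ I} => (i : Fin N)) (fun j : {j // j ∈ J} => (j : Fin N))
          - A.submatrix (fun i : {i // i ∈ I} => (i : Fin N)) (fun j : {j // j ∉ J} => (j : Fin N))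
            * Tc
            * A.submatrix (fun i : {i // i ∉ I} => (i : Fin N)) (fun j : {j // j ∈ J} => (j : Fin N)))
      = 1
    ∧ (A.submatrix (fun i : {i // i ∈ I} => (i : Fin N)) (fun j : {j // j ∈ J} => (j : Fin N))
          - A.submatrix (fun i : {i // i ∈ I} => (i : Fin N)) (fun j : {j // j ∉ J} => (j : Fin N))
            * Tc
            * A.submatrix (fun i : {i // i ∉ I} => (i : Fin N)) (fun j : {j // j ∈ J} => (j : Fin N)))
        * B.submatrix (fun j : {j // j ∈ J} => (j : Fin N)) (fun i : {i // i ∈ I} => (i : Fin N))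
      = 1 :=
  quasideterminant_formula_general (p := (· ∈ I)) (q := (· ∈ J)) hAB hBA hTc1 hTc2
end

section
/- Let R be a unital associative (not necessarily commutative) ring, let A be an N×N matrix over R, let I be an N×M matrix and J an M×N matrix over R. Assume that A is invertible, that the M×M matrix J·A⁻¹·I is invertible (so the generalized (I,J)-quasideterminant |A|_{IJ} exists), and that the N×N matrix A + I·J is invertible. Then the M×M matrix J·(A+IJ)⁻¹·I is invertible, i.e. the (I,J)-quasideterminant of A + IJ exists, and it is given by |A+IJ|_{IJ} = |A|_{IJ} + 𝟙_M, where 𝟙_M is the M×M identity matrix; equivalently, (J·(A+IJ)⁻¹·I)⁻¹ = (J·A⁻¹·I)⁻¹ + 𝟙_M. -/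
/-!
Put `X = J * A⁻¹ * I` and `Y = J * (A + I * J)⁻¹ * I`. The perturbation `I * J` factors through
`I` and `J`, so sandwiching the two resolvent identities for `A` and `A + I * J` between `J` and `I`
gives the closed relations `Y + Y * X = X` and `Y + X * Y = X`. Multiplying them by `X⁻¹`
on the right and on the left yields `Y * (X⁻¹ + 1) = 1` and `(X⁻¹ + 1) * Y = 1`.
-/

section Semiring

variable {S : Type*} [Semiring S] {x y k : S}

theorem mul_add_one_eq_one_of_add_mul_eq (hyx : y + y * x = x) (hxk : x * k = 1) :
    y * (k + 1) = 1 :=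
  calc y * (k + 1) = (y + y * x) * k := by rw [add_mul, mul_assoc, hxk, mul_add]
    _ = 1 := by rw [hyx, hxk]

theorem add_one_mul_eq_one_of_add_mul_eq (hxy : y + x * y = x) (hkx : k * x = 1) :
    (k + 1) * y = 1 :=
  calc (k + 1) * y = k * (y + x * y) := by rw [mul_add, ← mul_assoc, hkx, add_mul]
    _ = 1 := by rw [hxy, hkx]

end Semiring

section Matrix

variable {R m n p : Type*} [Semiring R] [Fintype m] [Fintype n] [Fintype p]
  [DecidableEq n] [DecidableEq p]
  {A : Matrix n p R} {B C : Matrix p n R}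

theorem resolvent_identity_left {D : Matrix n p R} (hAB : A * B = 1) (hC : C * (A + D) = 1) :
    C + C * D * B = B :=
  calc C + C * D * B = C * (A + D) * B := by
        rw [Matrix.mul_add, Matrix.add_mul, Matrix.mul_assoc C A B, hAB, Matrix.mul_one]
    _ = B := by rw [hC, Matrix.one_mul]

theorem resolvent_identity_right {D : Matrix n p R} (hBA : B * A = 1) (hC : (A + D) * C = 1) :
    C + B * D * C = B :=
  calc C + B * D * C = B * ((A + D) * C) := by
        rw [← Matrix.mul_assoc, Matrix.mul_add, Matrix.add_mul, hBA, Matrix.one_mul]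
    _ = B := by rw [hC, Matrix.mul_one]

theorem compressed_resolvent_identity_left {I : Matrix n m R} {J : Matrix m p R}
    (hAB : A * B = 1) (hC : C * (A + I * J) = 1) :
    J * C * I + J * C * I * (J * B * I) = J * B * I :=
  calc J * C * I + J * C * I * (J * B * I) = J * (C + C * (I * J) * B) * I := by
        simp only [Matrix.mul_add, Matrix.add_mul, Matrix.mul_assoc]
    _ = J * B * I := by rw [resolvent_identity_left hAB hC]

theorem compressed_resolvent_identity_right {I : Matrix n m R} {J : Matrix m p R}
    (hBA : B * A = 1) (hC : (A + I * J) * C = 1) :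
    J * C * I + J * B * I * (J * C * I) = J * B * I :=
  calc J * C * I + J * B * I * (J * C * I) = J * (C + B * (I * J) * C) * I := by
        simp only [Matrix.mul_add, Matrix.add_mul, Matrix.mul_assoc]
    _ = J * B * I := by rw [resolvent_identity_right hBA hC]

theorem quasideterminant_add_IJ_general [DecidableEq m] {I : Matrix n m R} {J : Matrix m p R}
    {K : Matrix m m R} (hAB : A * B = 1) (hBA : B * A = 1)
    (hK1 : J * B * I * K = 1) (hK2 : K * (J * B * I) = 1)
    (hC1 : (A + I * J) * C = 1) (hC2 : C * (A + I * J) = 1) :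
    J * C * I * (K + 1) = 1 ∧ (K + 1) * (J * C * I) = 1 :=
  ⟨mul_add_one_eq_one_of_add_mul_eq (compressed_resolvent_identity_left hAB hC2) hK1,
    add_one_mul_eq_one_of_add_mul_eq (compressed_resolvent_identity_right hBA hC1) hK2⟩

end Matrix

/-- **Shift of a generalized quasideterminant** (Theorem `|A + IJ|_{IJ} = |A|_{IJ} + 𝟙`).

Let `R` be a unital associative (not necessarily commutative) ring, `A` an invertible
`N × N` matrix over `R` (with two-sided inverse `B`), `I` an `N × M` matrix and `J` an
`M × N` matrix over `R`.  Assume that the `M × M` matrix `J * A⁻¹ * I` is invertible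
(with two-sided inverse `K = |A|_{IJ}`, the generalized `(I,J)`-quasideterminant of `A`),
and that `A + I * J` is invertible (with two-sided inverse `C`).  Then
`J * (A + I*J)⁻¹ * I` is invertible, i.e. the `(I,J)`-quasideterminant of `A + I*J`
exists, and `|A + IJ|_{IJ} = |A|_{IJ} + 𝟙_M`: that is, `K + 1` is a two-sided inverse
of `J * (A + I*J)⁻¹ * I`. -/
theorem quasideterminant_add_IJ
    {R : Type*} [Ring R] {N M : ℕ}
    (A B : Matrix (Fin N) (Fin N) R)
    (hAB : A * B = 1) (hBA : B * A = 1)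
    (I : Matrix (Fin N) (Fin M) R) (J : Matrix (Fin M) (Fin N) R)
    (K : Matrix (Fin M) (Fin M) R)
    (hK1 : (J * B * I) * K = 1) (hK2 : K * (J * B * I) = 1)
    (C : Matrix (Fin N) (Fin N) R)
    (hC1 : (A + I * J) * C = 1) (hC2 : C * (A + I * J) = 1) :
    (J * C * I) * (K + 1) = 1 ∧ (K + 1) * (J * C * I) = 1 :=
  quasideterminant_add_IJ_general hAB hBA hK1 hK2 hC1 hC2
end

section
/- Let V be a commutative ring equipped with a derivation d, and let A, B be N×N matrices whose entries are formal Laurent series in z⁻¹ over V (equivalently, formal Laurent series in z⁻¹ with coefficients in the N×N matrices over V). Define the symbol of the composition of the associated matrix pseudodifferential operators by (A∘B)(z) := Σ_{k≥0} (D^k A)(z)·(d^k B)(z), where D^k is the k-th Hasse derivative with respect to z, d acts on B entrywise and coefficientwise, and the product is the matrix product of Laurent series (only finitely many summands contribute to each coefficient, so the sum is well defined). Then Res_z tr((A∘B)(z)) − Res_z tr((B∘A)(z)) lies in the image of the derivation d; that is, the trace of the residue of the composition is symmetric in A and B up to total derivatives. -/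
/-!
We model the ring `V((z⁻¹))` of formal Laurent series in `z⁻¹` over a commutative ring
`V` by Hahn series `HahnSeries ℤ V`, where the Hahn exponent `j` records the coefficient
of `z⁻ʲ` (i.e. the Hahn variable is `X = z⁻¹`).  For `A(z) = Σₙ aₙ zⁿ` we have
`A.coeff j = a₋ⱼ`, multiplication of Hahn series is multiplication of Laurent series,
and the residue `Res_z A = a₋₁` is `A.coeff 1`.

A derivation `d : V → V` (an additive map satisfying the Leibniz rule) is extended to
`V((z⁻¹))` coefficientwise, via `HahnSeries.map`, and to matrices of Laurent series
entrywise, via `Matrix.map`; `D^k` denotes the `k`-th Hasse derivative with respect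
to `z`, applied entrywise to a matrix of Laurent series.

The symbol of the composition of the matrix pseudodifferential operators associated to
`N × N` matrices `A`, `B` of Laurent series is `(A∘B)(z) = Σ_{k≥0} (D^k A)(z)·(dᵏB)(z)`;
only finitely many summands contribute to each coefficient, and in particular
`Res_z tr((A∘B)(z)) = ∑ᶠ k, Res_z tr((D^k A)(z)·(dᵏB)(z))`, the sum over `k` of the
termwise trace-residues being a finitely supported sum (`finsum`).
-/

/-- The `k`-th Hasse derivative with respect to `z`:
`D^k A := Σₙ binom(n,k) · aₙ · z^(n−k)`, where `binom(n,k)` for `n : ℤ`, `k : ℕ` is the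
generalized binomial coefficient (`Ring.choose n k` for the binomial ring `ℤ`).
In the `z⁻¹`-coefficient picture, `(D^k A).coeff j = binom(k−j, k) • A.coeff (j−k)`. -/
noncomputable def hasseDeriv {V : Type*} [CommRing V] (k : ℕ) (f : HahnSeries ℤ V) :
    HahnSeries ℤ V where
  coeff j := Ring.choose ((k : ℤ) - j) k • f.coeff (j - k)
  isPWO_support' := by
    refine (f.isPWO_support'.add (Set.finite_singleton (k : ℤ)).isPWO).mono ?_
    intro j hj
    have hf : f.coeff (j - (k : ℤ)) ≠ 0 := by
      intro h
      apply hj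
      simp [h]
    exact ⟨j - (k : ℤ), hf, (k : ℤ), rfl, by ring⟩

/-!
Write `⟨A, B⟩ = Res_z tr (A B)` for the residue pairing and `δ` for the extension of `d` to
matrices of Laurent series. Three facts are used: `⟨·, ·⟩` is symmetric, it satisfies the Leibniz
rule `d ⟨A, B⟩ = ⟨δ A, B⟩ + ⟨A, δ B⟩`, and `Dᵏ` is adjoint to `(-1)ᵏ Dᵏ`. As `Dᵏ` and `δ` commute,
modulo the image of `d`
`⟨Dᵏ A, δᵏ B⟩ ≡ (-1)ᵏ ⟨δᵏ Dᵏ A, B⟩ = (-1)ᵏ ⟨B, Dᵏ δᵏ A⟩ = ⟨Dᵏ B, δᵏ A⟩`,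
so the two sums over `k` already agree term by term modulo total derivatives.
-/

theorem pairing_iterate_sub_mem_range {α β G : Type*} [AddCommGroup G] (d : G →+ G) (δ : α → α)
    (ε : β → β) (p : α → β → G) (hp : ∀ a b, d (p a b) = p (δ a) b + p a (ε b)) (k : ℕ) (a : α)
    (b : β) : p a (ε^[k] b) - (-1 : ℤˣ) ^ k • p (δ^[k] a) b ∈ d.range := by
  induction k generalizing a with
  | zero => simp
  | succ k ih =>
    have split : p a (ε^[k + 1] b) - (-1 : ℤˣ) ^ (k + 1) • p (δ^[k + 1] a) b =
        d (p a (ε^[k] b)) - (p (δ a) (ε^[k] b) - (-1 : ℤˣ) ^ k • p (δ^[k] (δ a)) b) := by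
      rw [hp, Function.iterate_succ_apply', Function.iterate_succ_apply, pow_succ', neg_one_mul,
        Units.neg_smul]
      abel
    rw [split]
    exact sub_mem ⟨_, rfl⟩ (ih (δ a))

section HahnSeriesProduct

variable {Γ R : Type*} [NonUnitalNonAssocSemiring R]

theorem hahnSeries_map_mul_of_leibniz [AddCommMonoid Γ] [PartialOrder Γ]
    [IsOrderedCancelAddMonoid Γ] (d : R →+ R) (hd : ∀ a b, d (a * b) = d a * b + a * d b)
    (f g : HahnSeries Γ R) : (f * g).map d = f.map d * g + f * g.map d := by
  have support_map (h : HahnSeries Γ R) : (h.map d).support ⊆ h.support :=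
    h.support_map_subset (d : ZeroHom R R)
  ext n
  rw [HahnSeries.coeff_add, HahnSeries.coeff_mul_left' f.isPWO_support (support_map f),
    HahnSeries.coeff_mul_right' g.isPWO_support (support_map g), HahnSeries.map_coeff,
    HahnSeries.coeff_mul, map_sum, ← Finset.sum_add_distrib]
  simp only [hd, HahnSeries.map_coeff]

theorem hahnSeries_coeff_mul_eq_finsum [AddCommGroup Γ] [PartialOrder Γ] [IsOrderedAddMonoid Γ]
    (f g : HahnSeries Γ R) (n : Γ) :
    (f * g).coeff n = ∑ᶠ i, f.coeff i * g.coeff (n - i) := by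
  classical
  rw [HahnSeries.coeff_mul, finsum_eq_sum_of_support_subset (s :=
    (Finset.antidiagonal f.isPWO_support g.isPWO_support n).image Prod.fst)]
  · rw [Finset.sum_image]
    · refine Finset.sum_congr rfl fun p hp => ?_
      obtain ⟨-, -, rfl⟩ := Finset.mem_antidiagonal.1 hp
      rw [add_sub_cancel_left]
    · intro p hp q hq h
      obtain ⟨-, -, hp⟩ := Finset.mem_antidiagonal.1 hp
      obtain ⟨-, -, hq⟩ := Finset.mem_antidiagonal.1 hq
      exact Prod.ext h (add_left_cancel (hp.trans (hq.symm.trans (by rw [h]))))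
  · intro i hi
    simp only [Finset.coe_image, Set.mem_image, Finset.mem_coe, Finset.mem_antidiagonal]
    exact ⟨(i, n - i), ⟨left_ne_zero_of_mul hi, right_ne_zero_of_mul hi, add_sub_cancel i n⟩, rfl⟩

theorem hahnSeries_coeff_mul_eq_zero_of_lt_add [AddCommGroup Γ] [LinearOrder Γ]
    [IsOrderedAddMonoid Γ] {f g : HahnSeries Γ R} {a b n : Γ} (hf : ∀ i < a, f.coeff i = 0)
    (hg : ∀ i < b, g.coeff i = 0) (hn : n < a + b) : (f * g).coeff n = 0 := by
  rw [hahnSeries_coeff_mul_eq_finsum]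
  refine finsum_eq_zero_of_forall_eq_zero fun i => ?_
  rcases lt_or_ge i a with hi | hi
  · rw [hf i hi, zero_mul]
  · rw [hg (n - i) (sub_lt_iff_lt_add'.2 (hn.trans_le (add_le_add_left hi b))), mul_zero]

end HahnSeriesProduct

section HasseDeriv

variable {V : Type*} [CommRing V]

theorem hasseDeriv_map (d : V →+ V) (k : ℕ) (f : HahnSeries ℤ V) :
    hasseDeriv k (f.map d) = (hasseDeriv k f).map d := by
  ext n
  simp only [hasseDeriv, HahnSeries.map_coeff, map_zsmul]

theorem hasseDeriv_coeff_eq_zero_of_lt (k : ℕ) (f : HahnSeries ℤ V) {i : ℤ}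
    (hi : i < f.order + k) : (hasseDeriv k f).coeff i = 0 := by
  simp only [hasseDeriv, HahnSeries.coeff_eq_zero_of_lt_order (sub_lt_iff_lt_add.2 hi), smul_zero]

theorem residue_hasseDeriv_mul (k : ℕ) (f g : HahnSeries ℤ V) :
    (hasseDeriv k f * g).coeff 1 = (-1 : ℤˣ) ^ k • (f * hasseDeriv k g).coeff 1 := by
  -- The left side differentiates the term of `f` in `z⁻ʲ`, the right side that of `g` in
  -- `z^(j + k - 1)`, and `binom(-j, k) = (-1)ᵏ binom(j + k - 1, k)`.
  have choose_reflect (j : ℤ) : Ring.choose ((k : ℤ) - (j + k)) k =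
      (-1 : ℤˣ) ^ k • Ring.choose ((k : ℤ) - (1 - j)) k := by
    rw [show (k : ℤ) - (j + k) = -j by ring, Ring.choose_neg, Int.negOnePow_def, zpow_natCast,
      show (k : ℤ) - (1 - j) = j + k - 1 by ring]
  rw [hahnSeries_coeff_mul_eq_finsum, hahnSeries_coeff_mul_eq_finsum,
    ← finsum_comp_equiv (Equiv.addRight (k : ℤ))]
  refine Eq.trans (finsum_congr fun j => ?_)
    ((DistribMulAction.toAddEquiv V ((-1 : ℤˣ) ^ k)).map_finsum _).symm
  simp only [hasseDeriv, Equiv.coe_addRight, DistribMulAction.toAddEquiv_apply]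
  rw [choose_reflect, add_sub_cancel_right, sub_add_eq_sub_sub, smul_assoc, smul_mul_assoc,
    smul_mul_assoc, mul_smul_comm]

end HasseDeriv

section MapCoeff

variable {m n V : Type*}

/-- The extension of an additive map `d`, entrywise and coefficientwise, to matrices of Laurent
series. It is the operator written as a `fun` in the main theorem, for matrices of any shape. -/
noncomputable def mapCoeff [AddMonoid V] (d : V →+ V) (A : Matrix m n (HahnSeries ℤ V)) :
    Matrix m n (HahnSeries ℤ V) :=
  A.map fun g => g.map d

theorem coeff_iterate_mapCoeff [AddMonoid V] (d : V →+ V) (k : ℕ)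
    (A : Matrix m n (HahnSeries ℤ V)) (i : m) (j : n) (l : ℤ) :
    ((mapCoeff d)^[k] A i j).coeff l = d^[k] ((A i j).coeff l) := by
  induction k generalizing A with
  | zero => rfl
  | succ k ih =>
    simp only [Function.iterate_succ_apply, ih, mapCoeff, Matrix.map_apply, HahnSeries.map_coeff]

theorem iterate_mapCoeff_map_hasseDeriv [CommRing V] (d : V →+ V) (k l : ℕ)
    (A : Matrix m n (HahnSeries ℤ V)) :
    (mapCoeff d)^[l] (A.map (hasseDeriv k)) = ((mapCoeff d)^[l] A).map (hasseDeriv k) := by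
  have commute : Function.Commute (mapCoeff d)
      fun M : Matrix m n (HahnSeries ℤ V) => M.map (hasseDeriv k) := fun M => by
    ext1 i j
    exact (hasseDeriv_map d k (M i j)).symm
  exact commute.iterate_left l A

end MapCoeff

section ResiduePairing

variable {m n V : Type*} [Fintype m] [Fintype n]

/-- The residue pairing `⟨A, B⟩ = Res_z tr(AB)` of rectangular matrices of Laurent series; the
residue, the coefficient of `z⁻¹`, sits at the Hahn exponent `1`. -/
noncomputable def residuePairing [NonUnitalNonAssocSemiring V] (A : Matrix m n (HahnSeries ℤ V))
    (B : Matrix n m (HahnSeries ℤ V)) : V :=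
  (A * B).trace.coeff 1

theorem residuePairing_eq_sum [NonUnitalNonAssocSemiring V] (A : Matrix m n (HahnSeries ℤ V))
    (B : Matrix n m (HahnSeries ℤ V)) :
    residuePairing A B = ∑ i, ∑ j, (A i j * B j i).coeff 1 := by
  simp only [residuePairing, Matrix.trace, Matrix.diag_apply, Matrix.mul_apply,
    HahnSeries.coeff_sum]

theorem residuePairing_comm [NonUnitalCommSemiring V] (A : Matrix m n (HahnSeries ℤ V))
    (B : Matrix n m (HahnSeries ℤ V)) : residuePairing A B = residuePairing B A := by
  rw [residuePairing, Matrix.trace_mul_comm, residuePairing]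

theorem map_residuePairing_of_leibniz [NonUnitalNonAssocSemiring V] (d : V →+ V)
    (hd : ∀ a b : V, d (a * b) = d a * b + a * d b) (A : Matrix m n (HahnSeries ℤ V))
    (B : Matrix n m (HahnSeries ℤ V)) :
    d (residuePairing A B) = residuePairing (mapCoeff d A) B + residuePairing A (mapCoeff d B) := by
  simp only [residuePairing_eq_sum, mapCoeff, Matrix.map_apply, map_sum, ← HahnSeries.map_coeff,
    hahnSeries_map_mul_of_leibniz d hd, HahnSeries.coeff_add, Finset.sum_add_distrib]

variable [CommRing V]

theorem residuePairing_hasseDeriv (k : ℕ) (A : Matrix m n (HahnSeries ℤ V))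
    (B : Matrix n m (HahnSeries ℤ V)) :
    residuePairing (A.map (hasseDeriv k)) B =
      (-1 : ℤˣ) ^ k • residuePairing A (B.map (hasseDeriv k)) := by
  simp only [residuePairing_eq_sum, Matrix.map_apply, residue_hasseDeriv_mul, Finset.smul_sum]

theorem hasFiniteSupport_residuePairing_hasseDeriv_iterate (d : V →+ V)
    (A : Matrix m n (HahnSeries ℤ V)) (B : Matrix n m (HahnSeries ℤ V)) :
    Function.HasFiniteSupport fun k : ℕ =>
      residuePairing (A.map (hasseDeriv k)) ((mapCoeff d)^[k] B) := by
  simp only [residuePairing_eq_sum]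
  refine .sum (fun i => .sum (fun j => ?_) _) _
  refine (Set.finite_Iic (1 - (A i j).order - (B j i).order).toNat).subset fun k => ?_
  contrapose!
  intro hk
  have coeff_iterate_eq_zero (l : ℤ) (hl : l < (B j i).order) :
      ((mapCoeff d)^[k] B j i).coeff l = 0 := by
    rw [coeff_iterate_mapCoeff, HahnSeries.coeff_eq_zero_of_lt_order hl, iterate_map_zero]
  refine Function.notMem_support.2 (hahnSeries_coeff_mul_eq_zero_of_lt_add
    (fun l => hasseDeriv_coeff_eq_zero_of_lt k (A i j)) coeff_iterate_eq_zero ?_)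
  rw [Set.mem_Iic] at hk
  omega

theorem residuePairing_hasseDeriv_iterate_sub_swap_mem_range (d : V →+ V)
    (hd : ∀ a b : V, d (a * b) = d a * b + a * d b) (k : ℕ) (A : Matrix m n (HahnSeries ℤ V))
    (B : Matrix n m (HahnSeries ℤ V)) :
    residuePairing (A.map (hasseDeriv k)) ((mapCoeff d)^[k] B) -
      residuePairing (B.map (hasseDeriv k)) ((mapCoeff d)^[k] A) ∈ d.range := by
  have swap : residuePairing (B.map (hasseDeriv k)) ((mapCoeff d)^[k] A) =
      (-1 : ℤˣ) ^ k • residuePairing ((mapCoeff d)^[k] (A.map (hasseDeriv k))) B := by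
    rw [residuePairing_hasseDeriv, residuePairing_comm, iterate_mapCoeff_map_hasseDeriv]
  rw [swap]
  exact pairing_iterate_sub_mem_range d _ _ residuePairing (map_residuePairing_of_leibniz d hd)
    k _ B

end ResiduePairing

theorem residue_trace_comp_symm_mod_total_derivatives_general
    {V : Type*} [CommRing V] {m n : Type*} [Fintype m] [Fintype n]
    (d : V →+ V) (hd : ∀ a b : V, d (a * b) = d a * b + a * d b)
    (A : Matrix m n (HahnSeries ℤ V)) (B : Matrix n m (HahnSeries ℤ V)) :
    ∃ v : V,
      (∑ᶠ k : ℕ, residuePairing (A.map (hasseDeriv k)) ((mapCoeff d)^[k] B)) -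
        (∑ᶠ k : ℕ, residuePairing (B.map (hasseDeriv k)) ((mapCoeff d)^[k] A)) = d v := by
  suffices h : _ ∈ d.range from h.imp fun _ => Eq.symm
  rw [← finsum_sub_distrib (hasFiniteSupport_residuePairing_hasseDeriv_iterate d A B)
    (hasFiniteSupport_residuePairing_hasseDeriv_iterate d B A)]
  exact finsum_induction (· ∈ d.range) (zero_mem _) (fun _ _ => add_mem)
    fun k => residuePairing_hasseDeriv_iterate_sub_swap_mem_range d hd k A B

/-- **The trace-residue of the composition is symmetric up to total derivatives:**
if `d` is a derivation of the commutative ring `V` and `A, B` are `N × N` matrices of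
Laurent series in `z⁻¹` over `V`, then
`Res_z tr((A∘B)(z)) − Res_z tr((B∘A)(z))` lies in the image of `d`, where
`(A∘B)(z) = Σ_{k≥0} (D^k A)(z)·(dᵏ B)(z)` and the trace-residue of the composition is
computed termwise as the (finitely supported) sum `∑ᶠ k, Res_z tr((D^k A)(z)·(dᵏ B)(z))`. -/
theorem residue_trace_comp_symm_mod_total_derivatives
    {V : Type*} [CommRing V] {N : ℕ}
    (d : V →+ V) (hd : ∀ a b : V, d (a * b) = d a * b + a * d b)
    (A B : Matrix (Fin N) (Fin N) (HahnSeries ℤ V)) :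
    ∃ v : V,
      (∑ᶠ k : ℕ,
        ((A.map (hasseDeriv k) *
          (fun M : Matrix (Fin N) (Fin N) (HahnSeries ℤ V) =>
            M.map fun g => g.map d)^[k] B).trace).coeff 1)
      - (∑ᶠ k : ℕ,
        ((B.map (hasseDeriv k) *
          (fun M : Matrix (Fin N) (Fin N) (HahnSeries ℤ V) =>
            M.map fun g => g.map d)^[k] A).trace).coeff 1)
      = d v :=
  residue_trace_comp_symm_mod_total_derivatives_general d hd A B
end

section
/- For any field F, the diagonal matrix diag(X⁻³, X⁻¹) ∈ Mat₂(F((X))) admits no square root: there is no 2×2 matrix Δ with entries in the field F((X)) of formal Laurent series such that Δ² = diag(X⁻³, X⁻¹). -/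
/-! Let `M ^ k = diagonal d`. Since `M` commutes with `diagonal d`, we have
`M i j * d j = d i * M i j`, and additivity of the order of Hahn series forces `M i j = 0` as soon
as `d i` and `d j` have different orders. If this happens for all `j ≠ i`, then `M i i ^ k = d i`,
so the order of `d i` is `k` times an exponent. For `diag(X⁻³, X⁻¹)` and `k = 2`, the order `-1`
would have to be even. -/

theorem pow_apply_self_of_forall_ne_eq_zero {n R : Type*} [Fintype n] [DecidableEq n] [Semiring R]
    {M : Matrix n n R} {i : n} (hM : ∀ j ≠ i, M i j = 0) (k : ℕ) : (M ^ k) i i = M i i ^ k := by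
  induction k with
  | zero => simp
  | succ k ih =>
    rw [pow_succ', Matrix.mul_apply, Fintype.sum_eq_single i fun j hj ↦ by rw [hM j hj, zero_mul],
      ih, pow_succ']

theorem apply_mul_eq_mul_apply_of_commute_diagonal {n R : Type*} [Fintype n] [DecidableEq n]
    [NonUnitalNonAssocSemiring R] {M : Matrix n n R} {d : n → R}
    (h : Commute M (Matrix.diagonal d)) (i j : n) : M i j * d j = d i * M i j := by
  rw [← Matrix.mul_diagonal, h.eq, Matrix.diagonal_mul]

section HahnSeries

variable {Γ R : Type*} [AddCommMonoid Γ] [LinearOrder Γ] [IsOrderedCancelAddMonoid Γ]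
  [Semiring R] [NoZeroDivisors R]

theorem eq_zero_of_mul_eq_mul_of_orderTop_ne {x a b : HahnSeries Γ R} (h : x * a = b * x)
    (hab : a.orderTop ≠ b.orderTop) : x = 0 := by
  by_contra hx
  refine hab (WithTop.add_left_cancel (HahnSeries.orderTop_ne_top.2 hx) ?_)
  calc x.orderTop + a.orderTop = (x * a).orderTop := (HahnSeries.orderTop_mul x a).symm
    _ = (b * x).orderTop := by rw [h]
    _ = x.orderTop + b.orderTop := by rw [HahnSeries.orderTop_mul, add_comm]

theorem no_square_root_diag_Xinv3_Xinv1_general {n : Type*} [Fintype n] [DecidableEq n]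
    {d : n → HahnSeries Γ R} {i : n} {k : ℕ} (hd : ∀ j ≠ i, (d j).orderTop ≠ (d i).orderTop)
    (hk : ∀ g : Γ, k • g ≠ (d i).order) :
    ¬ ∃ Δ : Matrix n n (HahnSeries Γ R), Δ ^ k = Matrix.diagonal d := by
  rintro ⟨Δ, h⟩
  have hcomm : Commute Δ (Matrix.diagonal d) := h ▸ Commute.self_pow Δ k
  have hrow : ∀ j ≠ i, Δ i j = 0 := fun j hj ↦
    eq_zero_of_mul_eq_mul_of_orderTop_ne (apply_mul_eq_mul_apply_of_commute_diagonal hcomm i j)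
      (hd j hj)
  have hroot : Δ i i ^ k = d i := by
    rw [← pow_apply_self_of_forall_ne_eq_zero hrow, h, Matrix.diagonal_apply_eq]
  exact hk (Δ i i).order (by rw [← HahnSeries.order_pow, hroot])

end HahnSeries

/-- **`diag(X⁻³, X⁻¹)` has no square root over `F((X))`:** for any field `F` there is
no `2 × 2` matrix `Δ` with entries in the field `F((X))` of formal Laurent series
(`LaurentSeries F`) such that `Δ² = diag(X⁻³, X⁻¹)`.  (Via the identification
`∂ = X⁻¹` this models the fact that the matrix `diag(∂³, ∂)`, whose Dieudonné
determinant has degree `4`, has no square root with constant, hence commuting,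
coefficients.) -/
theorem no_square_root_diag_Xinv3_Xinv1 (F : Type*) [Field F] :
    ¬ ∃ Δ : Matrix (Fin 2) (Fin 2) (LaurentSeries F),
      Δ ^ 2 = !![(HahnSeries.single (1 : ℤ) (1 : F))⁻¹ ^ 3, 0;
                 0, (HahnSeries.single (1 : ℤ) (1 : F))⁻¹] := by
  rw [← Matrix.diagonal_vec2]
  exact no_square_root_diag_Xinv3_Xinv1_general (i := 1) (by simp [Fin.forall_fin_two])
    fun g ↦ by simpa using (by lia : 2 * g ≠ -1)
end
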